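/- Let (X,d) be a proper metric space, N ≥ 1, (λ,ν) = (λ₁,…,λ_N,ν₁,…,ν_N) with λ in the simplex Δ_N and νᵢ ∈ 𝒫₁(X), and let (λⁿ,νⁿ) be a sequence in Δ_N × 𝒫₁(X)^N such that ∑ᵢ |λᵢⁿ − λᵢ| + maxᵢ W₁(νᵢⁿ,νᵢ) → 0 as n → ∞. Then the functionals F_n(μ) := ∑ᵢ λᵢⁿ W₁(νᵢⁿ,μ) Γ-converge, for the narrow topology, to F(μ) := ∑ᵢ λᵢ W₁(νᵢ,μ); in particular, if μⁿ ∈ Med_{λⁿ}(νⁿ) for all n, then every narrow cluster point of (μⁿ) belongs to Med_λ(ν). -/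

import Mathlib

open MeasureTheory Filter Topology
open scoped ENNReal NNReal

/-- The set of couplings (transport plans): Borel probability measures on `X × X`
with first marginal `μ` and second marginal `ν`. -/
def Couplings {X : Type*} [MeasurableSpace X] (μ ν : Measure X) :
    Set (Measure (X × X)) :=
  {γ | IsProbabilityMeasure γ ∧ γ.map Prod.fst = μ ∧ γ.map Prod.snd = ν}

/-- The Wasserstein distance of order `1` between two measures on a metric space:
the infimum over couplings `γ` of `∫ d(x,y) dγ`. -/
noncomputable def W1 {X : Type*} [MetricSpace X] [MeasurableSpace X]
    (μ ν : Measure X) : ℝ :=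
  (⨅ γ ∈ Couplings μ ν, ∫⁻ p, edist p.1 p.2 ∂γ).toReal

/-- `𝒫₁(X)`: Borel probability measures on `X` with finite first moment. -/
def P1 (X : Type*) [MetricSpace X] [MeasurableSpace X] : Set (Measure X) :=
  {μ | IsProbabilityMeasure μ ∧ ∀ x₀ : X, Integrable (fun x => dist x₀ x) μ}

/-- `λ` belongs to the simplex `Δ_N`: nonnegative weights summing to `1`. -/
def memSimplex {N : ℕ} (l : Fin N → ℝ) : Prop :=
  (∀ i, 0 ≤ l i) ∧ ∑ i, l i = 1

/-- The dispersion functional `μ ↦ ∑ᵢ λᵢ W₁(νᵢ, μ)`. -/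
noncomputable def medCost {X : Type*} [MetricSpace X] [MeasurableSpace X] {N : ℕ}
    (l : Fin N → ℝ) (ν : Fin N → Measure X) (μ : Measure X) : ℝ :=
  ∑ i, l i * W1 (ν i) μ

/-- The set of Wasserstein medians of `ν₁, …, ν_N` with weights `λ`:
minimizers over `𝒫₁(X)` of the dispersion functional. -/
def Med {X : Type*} [MetricSpace X] [MeasurableSpace X] {N : ℕ}
    (l : Fin N → ℝ) (ν : Fin N → Measure X) : Set (Measure X) :=
  {μ | μ ∈ P1 X ∧ ∀ ρ ∈ P1 X, medCost l ν μ ≤ medCost l ν ρ}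

/-- Narrow convergence of a sequence of measures: convergence of integrals of all
bounded continuous functions. -/
def NarrowTendsto {X : Type*} [MetricSpace X] [MeasurableSpace X]
    (μs : ℕ → Measure X) (μ : Measure X) : Prop :=
  ∀ f : BoundedContinuousFunction X ℝ,
    Tendsto (fun n => ∫ x, f x ∂(μs n)) atTop (𝓝 (∫ x, f x ∂μ))

/-!
The distance `W₁` is jointly lower semicontinuous for the narrow topology because, by Prokhorov's
theorem, the map sending a plan to its pair of marginals is proper, hence closed: taking the infimum
of a lower semicontinuous cost over the fibres of a closed map preserves lower semicontinuity. The
triangle inequality lets the data `νᵢⁿ` be replaced by `νᵢ` at a cost tending to zero, which gives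
the liminf inequality for the dispersion with values in `[0, ∞]`. Constant sequences are recovery
sequences. A narrow limit of medians has finite dispersion by the liminf inequality, which forces it
to have a finite first moment, and it is then a median by comparison with competitors in `𝒫₁(X)`.
-/

section Semicontinuity

lemma lowerSemicontinuous_iInf_fiber_of_isClosedMap {Y Z α : Type*} [TopologicalSpace Y]
    [TopologicalSpace Z] [CompleteLinearOrder α] [DenselyOrdered α] {f : Y → Z}
    (hf : IsClosedMap f) {g : Y → α} (hg : LowerSemicontinuous g) :
    LowerSemicontinuous fun z => ⨅ y ∈ f ⁻¹' {z}, g y := by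
  refine lowerSemicontinuous_iff_isClosed_preimage.2 fun c => ?_
  have hsublevel : (fun z => ⨅ y ∈ f ⁻¹' {z}, g y) ⁻¹' Set.Iic c =
      ⋂ b > c, f '' (g ⁻¹' Set.Iic b) := by
    ext z
    simp only [Set.mem_preimage, Set.mem_Iic, Set.mem_iInter]
    constructor
    · intro hz b hb
      obtain ⟨y, hy, hyb⟩ := by simpa only [iInf_lt_iff, exists_prop] using hz.trans_lt hb
      exact ⟨y, hyb.le, hy⟩
    · intro hz
      refine le_of_forall_gt_imp_ge_of_dense fun b hb => ?_
      obtain ⟨y, hyb, hy⟩ := hz b hb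
      exact (iInf₂_le y hy).trans hyb
  rw [hsublevel]
  exact isClosed_biInter fun b _ => hf _ (hg.isClosed_preimage b)

lemma sum_liminf_le_liminf_sum {α ι : Type*} [Fintype ι] {f : Filter α} [f.IsCountablyGenerated]
    (u : ι → α → ℝ≥0∞) : ∑ i, liminf (u i) f ≤ liminf (fun a => ∑ i, u i a) f := by
  -- Fatou's lemma for the counting measure.
  let _ : MeasurableSpace ι := ⊤
  simpa only [lintegral_count, tsum_fintype] using
    lintegral_liminf_le (μ := Measure.count) (u := f) (f := fun a i => u i a)
      fun _ => measurable_from_top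

lemma lowerSemicontinuous_lintegral_coe {Y : Type*} [TopologicalSpace Y] [MeasurableSpace Y]
    [OpensMeasurableSpace Y] {f : Y → ℝ≥0} (hf : Continuous f) :
    LowerSemicontinuous fun γ : ProbabilityMeasure Y => ∫⁻ y, f y ∂(γ : Measure Y) := by
  let truncation (k : ℕ) : BoundedContinuousFunction Y ℝ≥0 :=
    .mkOfBound ⟨fun y => min (f y) k, by fun_prop⟩ k fun x y => by
      have hmem (z : Y) : ((min (f z) k : ℝ≥0) : ℝ) ∈ Set.Icc 0 (k : ℝ) :=
        ⟨NNReal.coe_nonneg _, NNReal.coe_le_coe.2 (min_le_right _ _)⟩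
      exact (Real.dist_le_of_mem_Icc (hmem x) (hmem y)).trans_eq (sub_zero _)
  have hsup (y : Y) : (f y : ℝ≥0∞) = ⨆ k, (truncation k y : ℝ≥0∞) := by
    change _ = ⨆ k : ℕ, ((min (f y) k : ℝ≥0) : ℝ≥0∞)
    simp_rw [ENNReal.coe_min, ENNReal.coe_natCast]
    rw [← inf_iSup_eq, ENNReal.iSup_natCast, inf_top_eq]
  have hmono : Monotone fun k y => (truncation k y : ℝ≥0∞) := fun i j hij y =>
    ENNReal.coe_le_coe.2 (min_le_min_left _ (Nat.cast_le.2 hij))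
  simp_rw [hsup, lintegral_iSup (fun k => (by fun_prop)) hmono]
  exact lowerSemicontinuous_iSup fun k =>
    (ProbabilityMeasure.continuous_lintegral_boundedContinuousFunction
      (truncation k)).lowerSemicontinuous

end Semicontinuity

section Marginals

variable {X Y : Type*} [TopologicalSpace X] [MeasurableSpace X] [BorelSpace X]
  [TopologicalSpace Y] [MeasurableSpace Y] [BorelSpace Y]

lemma isTightMeasureSet_of_isCompact [PolishSpace X] {K : Set (ProbabilityMeasure X)}
    (hK : IsCompact K) : IsTightMeasureSet {(μ : Measure X) | μ ∈ K} := by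
  let := TopologicalSpace.upgradeIsCompletelyMetrizable X
  exact isTightMeasureSet_of_isCompact_closure (hK.isClosed.closure_eq.symm ▸ hK)

/-- The pair of marginals of a probability measure on a product. -/
noncomputable def marginals (γ : ProbabilityMeasure (X × Y)) :
    ProbabilityMeasure X × ProbabilityMeasure Y :=
  (γ.map measurable_fst.aemeasurable, γ.map measurable_snd.aemeasurable)

lemma isProperMap_marginals [PolishSpace X] [PolishSpace Y] :
    IsProperMap (marginals : ProbabilityMeasure (X × Y) → _) := by
  have hcont : Continuous (marginals : ProbabilityMeasure (X × Y) → _) :=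
    (ProbabilityMeasure.continuous_map continuous_fst).prodMk
      (ProbabilityMeasure.continuous_map continuous_snd)
  refine isProperMap_iff_isCompact_preimage.2 ⟨hcont, fun K hK => ?_⟩
  rw [← (hK.isClosed.preimage hcont).closure_eq]
  refine isCompact_closure_of_isTightMeasureSet (.prodMk ?_ ?_)
  · refine (isTightMeasureSet_of_isCompact (hK.image continuous_fst)).subset ?_
    rintro _ ⟨_, ⟨γ, hγ, rfl⟩, rfl⟩
    exact ⟨(marginals γ).1, ⟨_, hγ, rfl⟩, rfl⟩
  · refine (isTightMeasureSet_of_isCompact (hK.image continuous_snd)).subset ?_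
    rintro _ ⟨_, ⟨γ, hγ, rfl⟩, rfl⟩
    exact ⟨(marginals γ).2, ⟨_, hγ, rfl⟩, rfl⟩

end Marginals

lemma exists_gluing {X Y Z : Type*} [MeasurableSpace X] [MeasurableSpace Y] [MeasurableSpace Z]
    [StandardBorelSpace Z] [Nonempty Z] (γ : Measure (X × Y)) [SFinite γ] (γ' : Measure (Y × Z))
    [IsFiniteMeasure γ'] (h : γ.snd = γ'.fst) :
    ∃ π : Measure ((X × Y) × Z), π.fst = γ ∧ π.map (fun p => (p.1.2, p.2)) = γ' := by
  refine ⟨γ.compProd (γ'.condKernel.comap Prod.snd measurable_snd), Measure.fst_compProd _ _, ?_⟩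
  refine Measure.ext_of_lintegral _ fun f hf => ?_
  conv_rhs => rw [← γ'.disintegrate γ'.condKernel, ← h]
  rw [lintegral_map hf (by fun_prop), Measure.lintegral_compProd (by fun_prop),
    Measure.lintegral_compProd hf, Measure.snd, lintegral_map (by fun_prop) measurable_snd]
  simp only [ProbabilityTheory.Kernel.comap_apply]

/-- The Wasserstein distance `W₁` with values in `[0, ∞]`, so that `W1 μ ν = (eW1 μ ν).toReal`.
Unlike `W1`, it satisfies the triangle inequality and is lower semicontinuous on all probability
measures. -/
noncomputable def eW1 {X : Type*} [MetricSpace X] [MeasurableSpace X] (μ ν : Measure X) : ℝ≥0∞ :=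
  ⨅ γ ∈ Couplings μ ν, ∫⁻ p, edist p.1 p.2 ∂γ

section ExtendedDistance

variable {X : Type*} [MetricSpace X] [MeasurableSpace X]

lemma eW1_comm (μ ν : Measure X) : eW1 μ ν = eW1 ν μ := by
  suffices H : ∀ μ ν : Measure X, eW1 μ ν ≤ eW1 ν μ from le_antisymm (H μ ν) (H ν μ)
  refine fun μ ν => le_iInf₂ fun γ hγ => ?_
  have := hγ.1
  have hswap : γ.map MeasurableEquiv.prodComm ∈ Couplings μ ν :=
    ⟨Measure.isProbabilityMeasure_map (by fun_prop),
      (Measure.map_map measurable_fst measurable_swap).trans hγ.2.2,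
      (Measure.map_map measurable_snd measurable_swap).trans hγ.2.1⟩
  refine (iInf₂_le _ hswap).trans_eq ?_
  exact (lintegral_map_equiv _ _).trans (lintegral_congr fun p => edist_comm _ _)

lemma eW1_eq_iInf_fiber_marginals (μ ν : ProbabilityMeasure X) :
    eW1 (μ : Measure X) ν =
      ⨅ γ ∈ marginals ⁻¹' {(μ, ν)}, ∫⁻ p, edist p.1 p.2 ∂(γ : Measure (X × X)) := by
  refine le_antisymm (le_iInf₂ fun γ hγ => iInf₂_le _ ?_) (le_iInf₂ fun γ hγ => ?_)
  · obtain ⟨hfst, hsnd⟩ := Prod.ext_iff.1 hγ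
    exact ⟨inferInstance, congrArg Subtype.val hfst, congrArg Subtype.val hsnd⟩
  · exact iInf₂_le (⟨γ, hγ.1⟩ : ProbabilityMeasure (X × X))
      (Prod.ext (Subtype.ext hγ.2.1) (Subtype.ext hγ.2.2))

lemma lintegral_edist_of_mem_couplings_dirac [OpensMeasurableSpace X] {x₀ : X} {μ : Measure X}
    {γ : Measure (X × X)} (hγ : γ ∈ Couplings (.dirac x₀) μ) :
    ∫⁻ p, edist p.1 p.2 ∂γ = ∫⁻ x, edist x₀ x ∂μ := by
  have hfst : ∀ᵐ p ∂γ, p.1 = x₀ := by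
    refine ae_of_ae_map (p := fun x => x = x₀) measurable_fst.aemeasurable ?_
    rw [hγ.2.1]
    exact (ae_dirac_iff (measurableSet_singleton x₀)).2 rfl
  rw [← hγ.2.2, lintegral_map (by fun_prop) measurable_snd]
  exact lintegral_congr_ae (hfst.mono fun p hp => by simp only [hp])

lemma eW1_dirac_left [OpensMeasurableSpace X] (x₀ : X) (μ : Measure X) [IsProbabilityMeasure μ] :
    eW1 (.dirac x₀) μ = ∫⁻ x, edist x₀ x ∂μ := by
  have hprod : (Measure.dirac x₀).prod μ ∈ Couplings (.dirac x₀) μ :=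
    ⟨inferInstance, by simp, by simp⟩
  exact (biInf_congr fun _ hγ => lintegral_edist_of_mem_couplings_dirac hγ).trans
    (biInf_const ⟨_, hprod⟩)

lemma mem_P1_iff_eW1_dirac [OpensMeasurableSpace X] {μ : Measure X} :
    μ ∈ P1 X ↔ IsProbabilityMeasure μ ∧ ∀ x₀, eW1 (.dirac x₀) μ ≠ ∞ := by
  refine and_congr_right fun _ => forall_congr' fun x₀ => ?_
  rw [eW1_dirac_left, ← lt_top_iff_ne_top, Integrable, and_iff_right (by fun_prop),
    hasFiniteIntegral_iff_ofReal (ae_of_all _ fun _ => dist_nonneg)]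
  simp only [edist_dist]

variable [PolishSpace X] [BorelSpace X]

lemma eW1_triangle (μ ν ρ : Measure X) : eW1 μ ρ ≤ eW1 μ ν + eW1 ν ρ := by
  refine ENNReal.le_iInf₂_add_iInf₂ fun γ hγ γ' hγ' => ?_
  have := hγ.1
  have := hγ'.1
  have : Nonempty X := γ.nonempty_of_neZero.map Prod.fst
  obtain ⟨π, hπ, hπ'⟩ := exists_gluing γ γ' (hγ.2.2.trans hγ'.2.1.symm)
  have hm : Measurable fun p : (X × X) × X => (p.1.1, p.2) := by fun_prop
  have hm' : Measurable fun p : (X × X) × X => (p.1.2, p.2) := by fun_prop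
  have hcoupling : π.map (fun p => (p.1.1, p.2)) ∈ Couplings μ ρ := by
    have : IsProbabilityMeasure (π.map Prod.fst) := by rwa [← Measure.fst, hπ]
    have : IsProbabilityMeasure π := π.isProbabilityMeasure_of_map Prod.fst
    refine ⟨Measure.isProbabilityMeasure_map hm.aemeasurable, ?_, ?_⟩
    · rw [← hγ.2.1, ← hπ, Measure.fst, Measure.map_map measurable_fst hm,
        Measure.map_map measurable_fst measurable_fst]
      rfl
    · rw [← hγ'.2.2, ← hπ', Measure.map_map measurable_snd hm, Measure.map_map measurable_snd hm']
      rfl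
  calc eW1 μ ρ
      ≤ ∫⁻ p, edist p.1.1 p.2 ∂π :=
        (iInf₂_le _ hcoupling).trans_eq (lintegral_map (by fun_prop) hm)
    _ ≤ ∫⁻ p, edist p.1.1 p.1.2 + edist p.1.2 p.2 ∂π :=
        lintegral_mono fun p => edist_triangle _ _ _
    _ = ∫⁻ p, edist p.1.1 p.1.2 ∂π + ∫⁻ p, edist p.1.2 p.2 ∂π :=
        lintegral_add_left (by fun_prop) _
    _ = ∫⁻ p, edist p.1 p.2 ∂γ + ∫⁻ p, edist p.1 p.2 ∂γ' := by
        rw [← hπ, ← hπ', Measure.fst, lintegral_map (by fun_prop) measurable_fst,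
          lintegral_map (by fun_prop) hm']

lemma eW1_ne_top {μ ν : Measure X} (hμ : μ ∈ P1 X) (hν : ν ∈ P1 X) : eW1 μ ν ≠ ∞ := by
  rw [mem_P1_iff_eW1_dirac] at hμ hν
  have := hμ.1
  obtain ⟨x₀⟩ := μ.nonempty_of_neZero
  refine ne_top_of_le_ne_top (ENNReal.add_ne_top.2 ⟨?_, hν.2 x₀⟩) (eW1_triangle μ (.dirac x₀) ν)
  exact eW1_comm μ _ ▸ hμ.2 x₀

lemma mem_P1_of_eW1_ne_top {μ ν : Measure X} [IsProbabilityMeasure ν] (hμ : μ ∈ P1 X)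
    (h : eW1 μ ν ≠ ∞) : ν ∈ P1 X := by
  rw [mem_P1_iff_eW1_dirac] at hμ ⊢
  exact ⟨‹_›, fun x₀ => ne_top_of_le_ne_top (ENNReal.add_ne_top.2 ⟨hμ.2 x₀, h⟩)
    (eW1_triangle (.dirac x₀) μ ν)⟩

lemma lowerSemicontinuous_eW1 :
    LowerSemicontinuous fun p : ProbabilityMeasure X × ProbabilityMeasure X =>
      eW1 (p.1 : Measure X) p.2 := by
  simp_rw [eW1_eq_iInf_fiber_marginals, edist_nndist]
  exact lowerSemicontinuous_iInf_fiber_of_isClosedMap isProperMap_marginals.isClosedMap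
    (lowerSemicontinuous_lintegral_coe continuous_nndist)

lemma eW1_le_liminf_of_tendsto_eW1_zero {α : Type*} {L : Filter α} {ν : Measure X}
    [IsProbabilityMeasure ν] {νs : α → Measure X} (hν : Tendsto (fun a => eW1 ν (νs a)) L (𝓝 0))
    {μs : α → ProbabilityMeasure X} {μ : ProbabilityMeasure X} (hμ : Tendsto μs L (𝓝 μ)) :
    eW1 ν μ ≤ liminf (fun a => eW1 (νs a) (μs a)) L := by
  let P : ProbabilityMeasure X := ⟨ν, ‹_›⟩
  calc eW1 ν μ
      ≤ liminf (fun p => eW1 (p.1 : Measure X) p.2) (𝓝 (P, μ)) :=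
        lowerSemicontinuous_eW1.le_liminf (P, μ)
    _ ≤ liminf (fun a => eW1 ν (μs a)) L :=
        (tendsto_const_nhds.prodMk_nhds hμ).liminf_le_liminf_comp
    _ ≤ liminf ((fun a => eW1 ν (νs a)) + fun a => eW1 (νs a) (μs a)) L :=
        liminf_le_liminf (.of_forall fun a => eW1_triangle _ _ _)
    _ = liminf (fun a => eW1 (νs a) (μs a)) L :=
        ENNReal.liminf_add_of_left_tendsto_zero hν _

end ExtendedDistance

section Wasserstein

variable {X : Type*} [MetricSpace X] [MeasurableSpace X]

lemma W1_nonneg (μ ν : Measure X) : 0 ≤ W1 μ ν :=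
  ENNReal.toReal_nonneg

lemma W1_comm (μ ν : Measure X) : W1 μ ν = W1 ν μ :=
  congrArg ENNReal.toReal (eW1_comm μ ν)

variable [PolishSpace X] [BorelSpace X]

lemma ofReal_W1 {μ ν : Measure X} (hμ : μ ∈ P1 X) (hν : ν ∈ P1 X) :
    ENNReal.ofReal (W1 μ ν) = eW1 μ ν :=
  ENNReal.ofReal_toReal (eW1_ne_top hμ hν)

lemma W1_triangle {μ ν ρ : Measure X} (hμ : μ ∈ P1 X) (hν : ν ∈ P1 X) (hρ : ρ ∈ P1 X) :
    W1 μ ρ ≤ W1 μ ν + W1 ν ρ := by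
  have hμν := eW1_ne_top hμ hν
  have hνρ := eW1_ne_top hν hρ
  exact (ENNReal.toReal_mono (ENNReal.add_ne_top.2 ⟨hμν, hνρ⟩) (eW1_triangle μ ν ρ)).trans_eq
    (ENNReal.toReal_add hμν hνρ)

lemma abs_W1_sub_W1_le {μ ν ρ : Measure X} (hμ : μ ∈ P1 X) (hν : ν ∈ P1 X) (hρ : ρ ∈ P1 X) :
    |W1 μ ρ - W1 ν ρ| ≤ W1 μ ν := by
  have hμρ := W1_triangle hμ hν hρ
  have hνρ := W1_triangle hν hμ hρ
  rw [W1_comm ν μ] at hνρ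
  exact abs_le.2 ⟨by linarith, by linarith⟩

end Wasserstein

section NarrowConvergence

variable {X : Type*} [MetricSpace X] [MeasurableSpace X]

lemma NarrowTendsto.const (μ : Measure X) : NarrowTendsto (fun _ => μ) μ :=
  fun _ => tendsto_const_nhds

lemma NarrowTendsto.isProbabilityMeasure {μs : ℕ → Measure X} {μ : Measure X}
    (h : NarrowTendsto μs μ) (hμs : ∀ n, IsProbabilityMeasure (μs n)) :
    IsProbabilityMeasure μ := by
  have hmass := h (.const X 1)
  simp only [BoundedContinuousFunction.const_apply, integral_const, probReal_univ, smul_eq_mul,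
    mul_one] at hmass
  exact isProbabilityMeasure_iff_real.2 (tendsto_nhds_unique hmass tendsto_const_nhds)

lemma narrowTendsto_coe_iff [OpensMeasurableSpace X] {μs : ℕ → ProbabilityMeasure X}
    {μ : ProbabilityMeasure X} :
    NarrowTendsto (fun n => (μs n : Measure X)) μ ↔ Tendsto μs atTop (𝓝 μ) :=
  ProbabilityMeasure.tendsto_iff_forall_integral_tendsto.symm

end NarrowConvergence

/-- The dispersion functional with values in `[0, ∞]`; it is infinite, where `medCost` takes a junk
value, as soon as some `νᵢ` of positive weight is at infinite distance from `μ`. -/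
noncomputable def eMedCost {X ι : Type*} [MetricSpace X] [MeasurableSpace X] [Fintype ι]
    (l : ι → ℝ) (ν : ι → Measure X) (μ : Measure X) : ℝ≥0∞ :=
  ∑ i, ENNReal.ofReal (l i) * eW1 (ν i) μ

section Dispersion

variable {X : Type*} [MetricSpace X] [MeasurableSpace X] {N : ℕ} {l : Fin N → ℝ}
  {ν : Fin N → Measure X}

lemma memSimplex.exists_pos (hl : memSimplex l) : ∃ i, 0 < l i := by
  obtain ⟨i, -, hi⟩ := (Finset.sum_pos_iff_of_nonneg fun i _ => hl.1 i).1 (hl.2 ▸ one_pos)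
  exact ⟨i, hi⟩

lemma medCost_nonneg (hl : ∀ i, 0 ≤ l i) (ν : Fin N → Measure X) (μ : Measure X) :
    0 ≤ medCost l ν μ :=
  Finset.sum_nonneg fun i _ => mul_nonneg (hl i) (W1_nonneg _ _)

variable [PolishSpace X] [BorelSpace X]

lemma ofReal_medCost (hl : ∀ i, 0 ≤ l i) (hν : ∀ i, ν i ∈ P1 X) {μ : Measure X} (hμ : μ ∈ P1 X) :
    ENNReal.ofReal (medCost l ν μ) = eMedCost l ν μ := by
  rw [medCost, ENNReal.ofReal_sum_of_nonneg fun i _ => mul_nonneg (hl i) (W1_nonneg _ _)]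
  exact Finset.sum_congr rfl fun i _ => by rw [ENNReal.ofReal_mul (hl i), ofReal_W1 (hν i) hμ]

lemma mem_P1_of_eMedCost_ne_top {i : Fin N} (hli : 0 < l i) (hνi : ν i ∈ P1 X) {μ : Measure X}
    [IsProbabilityMeasure μ] (h : eMedCost l ν μ ≠ ∞) : μ ∈ P1 X := by
  refine mem_P1_of_eW1_ne_top hνi fun htop => ENNReal.sum_ne_top.1 h i (Finset.mem_univ i) ?_
  rw [htop, ENNReal.mul_top (ENNReal.ofReal_pos.2 hli).ne']

lemma mem_Med_of_forall_eMedCost_le (hl : ∀ i, 0 ≤ l i) (hl₀ : ∃ i, 0 < l i)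
    (hν : ∀ i, ν i ∈ P1 X) {μ : Measure X} [IsProbabilityMeasure μ]
    (h : ∀ ρ ∈ P1 X, eMedCost l ν μ ≤ ENNReal.ofReal (medCost l ν ρ)) : μ ∈ Med l ν := by
  obtain ⟨i, hli⟩ := hl₀
  have hμ : μ ∈ P1 X := mem_P1_of_eMedCost_ne_top hli (hν i)
    (ne_top_of_le_ne_top ENNReal.ofReal_ne_top (h (ν i) (hν i)))
  refine ⟨hμ, fun ρ hρ => (ENNReal.ofReal_le_ofReal_iff (medCost_nonneg hl ν ρ)).1 ?_⟩
  exact ofReal_medCost hl hν hμ ▸ h ρ hρ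

end Dispersion

section DataConvergence

variable {X : Type*} [MetricSpace X] [MeasurableSpace X] {N : ℕ} {l : Fin N → ℝ}
  {l' : ℕ → Fin N → ℝ} {ν : Fin N → Measure X} {ν' : ℕ → Fin N → Measure X}

lemma tendsto_weight_of_tendsto_data (hconv : Tendsto
    (fun n => (∑ i, |l' n i - l i|) + ⨆ i, W1 (ν' n i) (ν i)) atTop (𝓝 0)) (i : Fin N) :
    Tendsto (fun n => l' n i) atTop (𝓝 (l i)) := by
  refine tendsto_iff_dist_tendsto_zero.2 (squeeze_zero (fun _ => dist_nonneg) (fun n => ?_) hconv)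
  calc dist (l' n i) (l i)
      ≤ ∑ j, |l' n j - l j| :=
        Finset.single_le_sum (f := fun j => |l' n j - l j|) (fun _ _ => abs_nonneg _)
          (Finset.mem_univ i)
    _ ≤ (∑ j, |l' n j - l j|) + ⨆ j, W1 (ν' n j) (ν j) :=
        le_add_of_nonneg_right (Real.iSup_nonneg fun _ => W1_nonneg _ _)

lemma tendsto_W1_of_tendsto_data (hconv : Tendsto
    (fun n => (∑ i, |l' n i - l i|) + ⨆ i, W1 (ν' n i) (ν i)) atTop (𝓝 0)) (i : Fin N) :
    Tendsto (fun n => W1 (ν' n i) (ν i)) atTop (𝓝 0) := by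
  refine squeeze_zero (fun _ => W1_nonneg _ _) (fun n => ?_) hconv
  calc W1 (ν' n i) (ν i)
      ≤ ⨆ j, W1 (ν' n j) (ν j) :=
        le_ciSup (f := fun j => W1 (ν' n j) (ν j)) (Set.finite_range _).bddAbove i
    _ ≤ (∑ j, |l' n j - l j|) + ⨆ j, W1 (ν' n j) (ν j) :=
        le_add_of_nonneg_left (Finset.sum_nonneg fun _ _ => abs_nonneg _)

variable [PolishSpace X] [BorelSpace X]

lemma eMedCost_le_liminf {α ι : Type*} [Fintype ι] {L : Filter α} [L.IsCountablyGenerated]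
    [L.NeBot] {l : ι → ℝ} {ls : α → ι → ℝ} {ν : ι → Measure X} {νs : α → ι → Measure X}
    {μ : ProbabilityMeasure X} {μs : α → ProbabilityMeasure X}
    (hν : ∀ i, IsProbabilityMeasure (ν i)) (hweight : ∀ i, Tendsto (fun a => ls a i) L (𝓝 (l i)))
    (hdata : ∀ i, Tendsto (fun a => eW1 (ν i) (νs a i)) L (𝓝 0)) (hμ : Tendsto μs L (𝓝 μ)) :
    eMedCost l ν μ ≤ liminf (fun a => eMedCost (ls a) (νs a) (μs a)) L := by
  refine (Finset.sum_le_sum fun i _ => ?_).trans (sum_liminf_le_liminf_sum _)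
  calc ENNReal.ofReal (l i) * eW1 (ν i) μ
      ≤ liminf (fun a => ENNReal.ofReal (ls a i)) L * liminf (fun a => eW1 (νs a i) (μs a)) L :=
        mul_le_mul' (ENNReal.tendsto_ofReal (hweight i)).liminf_eq.ge
          (eW1_le_liminf_of_tendsto_eW1_zero (hdata i) hμ)
    _ ≤ liminf (fun a => ENNReal.ofReal (ls a i) * eW1 (νs a i) (μs a)) L := ENNReal.le_liminf_mul

lemma tendsto_medCost (hν : ∀ i, ν i ∈ P1 X) (hν' : ∀ n i, ν' n i ∈ P1 X)
    (hweight : ∀ i, Tendsto (fun n => l' n i) atTop (𝓝 (l i)))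
    (hdata : ∀ i, Tendsto (fun n => W1 (ν' n i) (ν i)) atTop (𝓝 0)) {μ : Measure X}
    (hμ : μ ∈ P1 X) :
    Tendsto (fun n => medCost (l' n) (ν' n) μ) atTop (𝓝 (medCost l ν μ)) :=
  tendsto_finsetSum _ fun i _ => (hweight i).mul <| tendsto_iff_dist_tendsto_zero.2 <|
    squeeze_zero (fun _ => dist_nonneg) (fun n => abs_W1_sub_W1_le (hν' n i) (hν i) hμ) (hdata i)

lemma eMedCost_le_liminf_ofReal_medCost (hν : ∀ i, ν i ∈ P1 X) (hν' : ∀ n i, ν' n i ∈ P1 X)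
    (hweight : ∀ i, Tendsto (fun n => l' n i) atTop (𝓝 (l i)))
    (hdata : ∀ i, Tendsto (fun n => W1 (ν' n i) (ν i)) atTop (𝓝 0))
    (hl' : ∀ n i, 0 ≤ l' n i) {μs : ℕ → Measure X} {μ : Measure X} (hμs : ∀ n, μs n ∈ P1 X)
    (h : NarrowTendsto μs μ) :
    eMedCost l ν μ ≤ liminf (fun n => ENNReal.ofReal (medCost (l' n) (ν' n) (μs n))) atTop := by
  have hμ := h.isProbabilityMeasure fun n => (hμs n).1
  have hdata' (i : Fin N) : Tendsto (fun n => eW1 (ν i) (ν' n i)) atTop (𝓝 0) := by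
    simpa only [ofReal_W1 (hν' _ i) (hν i), eW1_comm (ν i), ENNReal.ofReal_zero] using
      ENNReal.tendsto_ofReal (hdata i)
  simp_rw [fun n => ofReal_medCost (hl' n) (hν' n) (hμs n)]
  exact eMedCost_le_liminf (μ := ⟨μ, hμ⟩) (μs := fun n => ⟨μs n, (hμs n).1⟩)
    (fun i => (hν i).1) hweight hdata' (narrowTendsto_coe_iff.1 h)

lemma mem_Med_of_narrowTendsto (hν : ∀ i, ν i ∈ P1 X) (hν' : ∀ n i, ν' n i ∈ P1 X)
    (hweight : ∀ i, Tendsto (fun n => l' n i) atTop (𝓝 (l i)))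
    (hdata : ∀ i, Tendsto (fun n => W1 (ν' n i) (ν i)) atTop (𝓝 0))
    (hl : ∃ i, 0 < l i) (hl' : ∀ n i, 0 ≤ l' n i)
    {μs : ℕ → Measure X} {μ : Measure X} (hμs : ∀ n, μs n ∈ Med (l' n) (ν' n))
    (h : NarrowTendsto μs μ) : μ ∈ Med l ν := by
  have hl₀ (i : Fin N) : 0 ≤ l i := ge_of_tendsto' (hweight i) fun n => hl' n i
  have := h.isProbabilityMeasure fun n => (hμs n).1.1
  refine mem_Med_of_forall_eMedCost_le hl₀ hl hν fun ρ hρ => ?_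
  calc eMedCost l ν μ
      ≤ liminf (fun n => ENNReal.ofReal (medCost (l' n) (ν' n) (μs n))) atTop :=
        eMedCost_le_liminf_ofReal_medCost hν hν' hweight hdata hl' (fun n => (hμs n).1) h
    _ ≤ liminf (fun n => ENNReal.ofReal (medCost (l' n) (ν' n) ρ)) atTop :=
        liminf_le_liminf (.of_forall fun n => ENNReal.ofReal_le_ofReal ((hμs n).2 ρ hρ))
    _ = ENNReal.ofReal (medCost l ν ρ) :=
        (ENNReal.tendsto_ofReal (tendsto_medCost hν hν' hweight hdata hρ)).liminf_eq

end DataConvergence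

theorem gammaConvergence_of_dataConvergence_general
    {X : Type*} [MetricSpace X] [PolishSpace X] [MeasurableSpace X] [BorelSpace X] {N : ℕ}
    {l : Fin N → ℝ} (hl : ∃ i, 0 < l i) {ν : Fin N → Measure X} (hν : ∀ i, ν i ∈ P1 X)
    {l' : ℕ → Fin N → ℝ} (hl' : ∀ n i, 0 ≤ l' n i)
    {ν' : ℕ → Fin N → Measure X} (hν' : ∀ n i, ν' n i ∈ P1 X)
    (hweight : ∀ i, Tendsto (fun n => l' n i) atTop (𝓝 (l i)))
    (hdata : ∀ i, Tendsto (fun n => W1 (ν' n i) (ν i)) atTop (𝓝 0)) :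
    (∀ (μs : ℕ → Measure X) (μ : Measure X), (∀ n, μs n ∈ P1 X) → μ ∈ P1 X →
      NarrowTendsto μs μ →
        ENNReal.ofReal (medCost l ν μ) ≤
          liminf (fun n => ENNReal.ofReal (medCost (l' n) (ν' n) (μs n))) atTop) ∧
    (∀ μ ∈ P1 X, ∃ μs : ℕ → Measure X, (∀ n, μs n ∈ P1 X) ∧ NarrowTendsto μs μ ∧
        limsup (fun n => ENNReal.ofReal (medCost (l' n) (ν' n) (μs n))) atTop ≤
          ENNReal.ofReal (medCost l ν μ)) ∧
    (∀ (μs : ℕ → Measure X) (μ : Measure X), (∀ n, μs n ∈ Med (l' n) (ν' n)) →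
      ∀ φ : ℕ → ℕ, StrictMono φ → NarrowTendsto (fun n => μs (φ n)) μ → μ ∈ Med l ν) := by
  have hl₀ (i : Fin N) : 0 ≤ l i := ge_of_tendsto' (hweight i) fun n => hl' n i
  refine ⟨fun μs μ hμs hμ h => ?_, fun μ hμ => ⟨fun _ => μ, fun _ => hμ, .const μ, ?_⟩,
    fun μs μ hμs φ hφ h => ?_⟩
  · rw [ofReal_medCost hl₀ hν hμ]
    exact eMedCost_le_liminf_ofReal_medCost hν hν' hweight hdata hl' hμs h
  · exact (ENNReal.tendsto_ofReal (tendsto_medCost hν hν' hweight hdata hμ)).limsup_eq.le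
  · exact mem_Med_of_narrowTendsto hν (fun n => hν' (φ n))
      (fun i => (hweight i).comp hφ.tendsto_atTop) (fun i => (hdata i).comp hφ.tendsto_atTop)
      hl (fun n => hl' (φ n)) (fun n => hμs (φ n)) h

/-- If `∑ᵢ |λᵢⁿ − λᵢ| + maxᵢ W₁(νᵢⁿ, νᵢ) → 0`, then the dispersion
functionals `Fₙ(μ) = ∑ᵢ λᵢⁿ W₁(νᵢⁿ, μ)` Γ-converge for the narrow topology to
`F(μ) = ∑ᵢ λᵢ W₁(νᵢ, μ)` (liminf inequality along narrowly convergent sequences and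
existence of recovery sequences); in particular every narrow cluster point of a
sequence of medians `μⁿ ∈ Med_{λⁿ}(νⁿ)` belongs to `Med_λ(ν)`. -/
theorem gammaConvergence_of_dataConvergence
    {X : Type*} [MetricSpace X] [ProperSpace X] [MeasurableSpace X] [BorelSpace X]
    {N : ℕ} (hN : 1 ≤ N) [NeZero N]
    {l : Fin N → ℝ} (hl : memSimplex l) {ν : Fin N → Measure X} (hν : ∀ i, ν i ∈ P1 X)
    {l' : ℕ → Fin N → ℝ} (hl' : ∀ n, memSimplex (l' n))
    {ν' : ℕ → Fin N → Measure X} (hν' : ∀ n i, ν' n i ∈ P1 X)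
    (hconv : Tendsto
      (fun n => (∑ i, |l' n i - l i|) + ⨆ i, W1 (ν' n i) (ν i)) atTop (𝓝 0)) :
    (∀ (μs : ℕ → Measure X) (μ : Measure X), (∀ n, μs n ∈ P1 X) → μ ∈ P1 X →
      NarrowTendsto μs μ →
        ENNReal.ofReal (medCost l ν μ) ≤
          Filter.liminf (fun n => ENNReal.ofReal (medCost (l' n) (ν' n) (μs n))) atTop) ∧
    (∀ μ ∈ P1 X, ∃ μs : ℕ → Measure X, (∀ n, μs n ∈ P1 X) ∧ NarrowTendsto μs μ ∧
        Filter.limsup (fun n => ENNReal.ofReal (medCost (l' n) (ν' n) (μs n))) atTop ≤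
          ENNReal.ofReal (medCost l ν μ)) ∧
    (∀ (μs : ℕ → Measure X) (μ : Measure X), (∀ n, μs n ∈ Med (l' n) (ν' n)) →
      ∀ φ : ℕ → ℕ, StrictMono φ → NarrowTendsto (fun n => μs (φ n)) μ →
        μ ∈ Med l ν) := by
  exact gammaConvergence_of_dataConvergence_general hl.exists_pos hν (fun n => (hl' n).1) hν'
    (tendsto_weight_of_tendsto_data hconv) (tendsto_W1_of_tendsto_data hconv)
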